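/- arXiv:2210.10613 — 2 statements merged into one kernel-verified Lean document; each statement's English description precedes it below -/
import Mathlib

section
/- Let m and M be positive natural numbers and let s and t be multisets of vectors in ℝ^m (elements of Fin m → ℝ), each of cardinality M, such that for every coordinate index i the multiset of i-th coordinates of the members of s equals the multiset of i-th coordinates of the members of t. Then t can be obtained from s by a sequence of at most m·(M − 1) feature swaps. -/
/-- A feature swap on a multiset of vectors in ℝ^m: choose two members `u, v`
and a coordinate `i`, and replace them by the vectors obtained from `u` and `v`
by exchanging their `i`-th coordinates. -/
def FeatureSwap (m : ℕ) (s t : Multiset (Fin m → ℝ)) : Prop :=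
  ∃ (u v : Fin m → ℝ) (i : Fin m) (r : Multiset (Fin m → ℝ)),
    s = u ::ₘ v ::ₘ r ∧
    t = (Function.update u i (v i)) ::ₘ (Function.update v i (u i)) ::ₘ r

/-- `SwapsWithin m K s t` means `t` can be obtained from `s` by a chain of at
most `K` single feature swaps. -/
def SwapsWithin (m : ℕ) : ℕ → Multiset (Fin m → ℝ) → Multiset (Fin m → ℝ) → Prop
  | 0 => Eq
  | K + 1 => fun s t => s = t ∨ ∃ u, FeatureSwap m s u ∧ SwapsWithin m K u t

/-!
The target is assembled one vector at a time. Every coordinate of a vector `w` of the target occurs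
in that coordinate somewhere in the source, so one swap per coordinate turns a chosen member of the
source into `w`. Swaps preserve all coordinate multisets, so `w` can be set aside on both sides. The
last remaining vector is then already correct, which accounts for the `- 1` in the bound.
-/

section Chains

variable {α β : Type*} {r : α → α → Prop} {a b c : α} {n k : ℕ}

/-- `ReachesWithin r n a b` means that `b` can be reached from `a` by a chain of at most `n`
steps of the relation `r`. The constructor `refl` allows any bound, so the bound need not be
attained. -/
inductive ReachesWithin (r : α → α → Prop) : ℕ → α → α → Prop
  | refl (n : ℕ) (a : α) : ReachesWithin r n a a
  | head {n : ℕ} {a b c : α} (hab : r a b) (hbc : ReachesWithin r n b c) :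
      ReachesWithin r (n + 1) a c

namespace ReachesWithin

theorem single (hab : r a b) : ReachesWithin r 1 a b :=
  head hab (refl 0 b)

theorem mono (h : ReachesWithin r n a b) (hnk : n ≤ k) : ReachesWithin r k a b := by
  induction h generalizing k with
  | refl => exact refl k _
  | head hab _ ih =>
    obtain ⟨k, rfl⟩ := Nat.exists_eq_add_of_le' hnk
    exact head hab (ih (by lia))

theorem trans (hab : ReachesWithin r n a b) (hbc : ReachesWithin r k b c) :
    ReachesWithin r (n + k) a c := by
  induction hab with
  | refl n => exact hbc.mono (Nat.le_add_left k n)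
  | @head n _ _ _ hab _ ih => exact Nat.add_right_comm n k 1 ▸ head hab (ih hbc)

theorem lift {p : β → β → Prop} (f : α → β) (hf : ∀ a b, r a b → p (f a) (f b))
    (h : ReachesWithin r n a b) : ReachesWithin p n (f a) (f b) := by
  induction h with
  | refl n a => exact refl n (f a)
  | head hab _ ih => exact head (hf _ _ hab) ih

theorem apply_eq {f : α → β} (hf : ∀ a b, r a b → f a = f b) (h : ReachesWithin r n a b) :
    f a = f b := by
  induction h with
  | refl => rfl
  | head hab _ ih => exact (hf _ _ hab).trans ih

end ReachesWithin

end Chains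

section CoordSwap

variable {ι : Type*} [DecidableEq ι] {α : ι → Type*} {s t : Multiset (∀ i, α i)}

/-- A feature swap on a multiset of dependent functions: two members exchange their values at one
index. For functions `Fin m → ℝ` this is `FeatureSwap m`. -/
def CoordSwap (s t : Multiset (∀ i, α i)) : Prop :=
  ∃ (u v : ∀ i, α i) (i : ι) (r : Multiset (∀ i, α i)),
    s = u ::ₘ v ::ₘ r ∧
    t = Function.update u i (v i) ::ₘ Function.update v i (u i) ::ₘ r

namespace CoordSwap

theorem card_eq (h : CoordSwap s t) : s.card = t.card := by
  obtain ⟨u, v, i, r, rfl, rfl⟩ := h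
  simp only [Multiset.card_cons]

theorem map_apply_eq (h : CoordSwap s t) (j : ι) : s.map (· j) = t.map (· j) := by
  obtain ⟨u, v, i, r, rfl, rfl⟩ := h
  obtain rfl | hji := eq_or_ne j i
  · simp only [Multiset.map_cons, Function.update_self, Multiset.cons_swap]
  · simp only [Multiset.map_cons, Function.update_of_ne hji]

theorem cons (h : CoordSwap s t) (w : ∀ i, α i) : CoordSwap (w ::ₘ s) (w ::ₘ t) := by
  obtain ⟨u, v, i, r, rfl, rfl⟩ := h
  exact ⟨u, v, i, w ::ₘ r, by simp only [Multiset.cons_swap w], by simp only [Multiset.cons_swap w]⟩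

end CoordSwap

theorem exists_reachesWithin_one_update_cons (u : ∀ i, α i) {i : ι} {a : α i}
    (ha : a ∈ (u ::ₘ s).map (· i)) :
    ∃ s', ReachesWithin CoordSwap 1 (u ::ₘ s) (Function.update u i a ::ₘ s') := by
  rw [Multiset.map_cons, Multiset.mem_cons] at ha
  rcases ha with rfl | ha
  · exact ⟨s, by rw [Function.update_eq_self]; exact .refl 1 _⟩
  · obtain ⟨v, hv, rfl⟩ := Multiset.mem_map.1 ha
    obtain ⟨r, rfl⟩ := Multiset.exists_cons_of_mem hv
    exact ⟨Function.update v i (u i) ::ₘ r, .single ⟨u, v, i, r, rfl, rfl⟩⟩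

theorem exists_reachesWithin_card_piecewise_cons (u w : ∀ i, α i) (I : Finset ι)
    (hw : ∀ i ∈ I, w i ∈ (u ::ₘ s).map (· i)) :
    ∃ s', ReachesWithin CoordSwap I.card (u ::ₘ s) (I.piecewise w u ::ₘ s') := by
  induction I using Finset.induction_on with
  | empty => exact ⟨s, by rw [Finset.piecewise_empty]; exact .refl _ _⟩
  | insert j I hj ih =>
    obtain ⟨s₁, h₁⟩ := ih fun i hi => hw i (Finset.mem_insert_of_mem hi)
    have hwj : w j ∈ (I.piecewise w u ::ₘ s₁).map (· j) :=
      h₁.apply_eq (fun _ _ h => h.map_apply_eq j) ▸ hw j (Finset.mem_insert_self j I)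
    obtain ⟨s₂, h₂⟩ := exists_reachesWithin_one_update_cons _ hwj
    rw [Finset.card_insert_of_notMem hj, Finset.piecewise_insert]
    exact ⟨s₂, h₁.trans h₂⟩

variable [Fintype ι]

theorem exists_reachesWithin_cons_of_map_apply_eq {u w : ∀ i, α i}
    (hcard : s.card = t.card) (h : ∀ i, (u ::ₘ s).map (· i) = (w ::ₘ t).map (· i)) :
    ∃ s', ReachesWithin CoordSwap (Fintype.card ι) (u ::ₘ s) (w ::ₘ s') ∧
      s'.card = t.card ∧ ∀ i, s'.map (· i) = t.map (· i) := by
  have hw : ∀ i ∈ Finset.univ, w i ∈ (u ::ₘ s).map (· i) := fun i _ =>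
    h i ▸ Multiset.mem_map_of_mem (· i) (Multiset.mem_cons_self w t)
  obtain ⟨s', hs'⟩ := exists_reachesWithin_card_piecewise_cons u w Finset.univ hw
  rw [Finset.piecewise_univ, Finset.card_univ] at hs'
  refine ⟨s', hs', ?_, fun i => ?_⟩
  · have := hs'.apply_eq fun _ _ => CoordSwap.card_eq
    simp only [Multiset.card_cons] at this
    lia
  · have := (hs'.apply_eq fun _ _ hst => hst.map_apply_eq i).symm.trans (h i)
    simpa only [Multiset.map_cons, Multiset.cons_inj_right] using this

theorem reachesWithin_cons_of_map_apply_eq {u w : ∀ i, α i} (hcard : s.card = t.card)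
    (h : ∀ i, (u ::ₘ s).map (· i) = (w ::ₘ t).map (· i)) :
    ReachesWithin CoordSwap (Fintype.card ι * t.card) (u ::ₘ s) (w ::ₘ t) := by
  induction t using Multiset.induction_on generalizing s u w with
  | empty =>
    obtain rfl := Multiset.card_eq_zero.1 hcard
    obtain rfl : u = w := funext fun i => by simpa using h i
    exact .refl _ _
  | cons v t ih =>
    obtain ⟨s', hs', hcard', h'⟩ := exists_reachesWithin_cons_of_map_apply_eq hcard h
    obtain ⟨u', s'', rfl, hcard''⟩ := Multiset.card_eq_succ_iff.1 (hcard'.trans (t.card_cons v))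
    have htail := (ih hcard'' h').lift (w ::ₘ ·) fun _ _ hst => hst.cons w
    rw [Multiset.card_cons, Nat.mul_succ, Nat.add_comm]
    exact hs'.trans htail

theorem swapEquivalent_within_bound_of_coordinateMultisets_eq_general
    (hcard : s.card = t.card) (h : ∀ i, s.map (· i) = t.map (· i)) :
    ReachesWithin CoordSwap (Fintype.card ι * (t.card - 1)) s t := by
  induction t using Multiset.induction_on with
  | empty => exact Multiset.card_eq_zero.1 hcard ▸ .refl _ _
  | cons w t _ =>
    rw [Multiset.card_cons] at hcard ⊢
    obtain ⟨u, s', rfl, hcard'⟩ := Multiset.card_eq_succ_iff.1 hcard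
    exact reachesWithin_cons_of_map_apply_eq hcard' h

end CoordSwap

theorem ReachesWithin.swapsWithin {m K : ℕ} {s t : Multiset (Fin m → ℝ)}
    (h : ReachesWithin CoordSwap K s t) : SwapsWithin m K s t := by
  induction h with
  | refl K s =>
    cases K with
    | zero => exact Eq.refl s
    | succ K => exact Or.inl rfl
  | head hsu _ ih => exact Or.inr ⟨_, hsu, ih⟩

/-- If two multisets of M vectors in ℝ^m have, for every coordinate, the same
multiset of that coordinate's values, then one can be obtained from the other
by at most m·(M − 1) feature swaps. -/
theorem swapEquivalent_within_bound_of_coordinateMultisets_eq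
    (m M : ℕ) (hm : 0 < m) (hM : 0 < M)
    (s t : Multiset (Fin m → ℝ))
    (hsc : Multiset.card s = M) (htc : Multiset.card t = M)
    (h : ∀ i : Fin m, s.map (fun x => x i) = t.map (fun x => x i)) :
    SwapsWithin m (m * (M - 1)) s t := by
  subst htc
  simpa only [Fintype.card_fin] using
    (swapEquivalent_within_bound_of_coordinateMultisets_eq_general hsc h).swapsWithin
end

section
/- Let lb < hb be real numbers, let m, N be positive natural numbers, and let n be a natural number with n ≥ N. For a multiset s of vectors in [lb, hb]^m (elements x : Fin m → ℝ with lb ≤ x i ≤ hb), define its encoding to consist of: for each coordinate index i and each degree k with 0 ≤ k ≤ n, the normalized power sum ∑_{x ∈ s} ((x i − lb)/(hb − lb))^k, together with the cardinality of s. Then this encoding is injective up to feature swaps: if s and t are two such multisets, each of cardinality at least 1 and at most N, whose encodings are equal, then s.card = t.card and for every coordinate index i the multiset of i-th coordinates of s equals the multiset of i-th coordinates of t (equivalently, s and t are swap-equivalent). -/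
/-- The encoding of a multiset `s` of vectors in ℝ^m: for each coordinate `i`
and each degree `k ≤ n`, the normalized power sum
`∑_{x ∈ s} ((x i − lb)/(hb − lb))^k`, together with the cardinality of `s`. -/
noncomputable def dynamicSetEncoding (lb hb : ℝ) (m n : ℕ) (s : Multiset (Fin m → ℝ)) :
    (Fin m → Fin (n + 1) → ℝ) × ℕ :=
  (fun i k => (s.map (fun x => ((x i - lb) / (hb - lb)) ^ (k : ℕ))).sum,
   Multiset.card s)

/-!
The normalized power sums of a coordinate determine its multiset of values: degree `0` counts the
values (with the convention `0 ^ 0 = 1`), Newton's identities then recover the elementary symmetric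
functions from the power sums, dividing by `k` at degree `k`, and by Vieta these are, up to sign,
the coefficients of the monic polynomial whose multiset of roots is the multiset of normalized
values. Normalization is an injective affine map, so it loses nothing.
-/

section NewtonIdentities

variable {R : Type*} [CommRing R]

theorem natCast_mul_esymm_eq_sum (s : Multiset R) (k : ℕ) :
    (k : R) * s.esymm k = (-1) ^ (k + 1) *
      ∑ a ∈ Finset.HasAntidiagonal.antidiagonal k with a.1 < k,
        (-1) ^ a.1 * s.esymm a.1 * (s.map (· ^ a.2)).sum := by
  classical
  have hesymm (j : ℕ) :
      MvPolynomial.aeval (fun x : s => (x : R)) (MvPolynomial.esymm s R j) = s.esymm j := by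
    rw [MvPolynomial.aeval_esymm_eq_multiset_esymm, Multiset.map_univ_coe]
  have hpsum (j : ℕ) :
      MvPolynomial.aeval (fun x : s => (x : R)) (MvPolynomial.psum s R j) =
        (s.map (· ^ j)).sum := by
    rw [← Multiset.map_univ_comp_coe]
    simp [MvPolynomial.psum]
  have newton := congrArg (MvPolynomial.aeval fun x : s => (x : R))
    (MvPolynomial.mul_esymm_eq_sum s R k)
  simpa only [map_mul, map_sum, map_pow, map_neg, map_one, map_natCast, hesymm, hpsum]
    using newton

theorem esymm_eq_of_sum_map_pow_eq [IsAddTorsionFree R] {s t : Multiset R} {n : ℕ}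
    (h : ∀ k ∈ Finset.Icc 1 n, (s.map (· ^ k)).sum = (t.map (· ^ k)).sum) {k : ℕ} (hk : k ≤ n) :
    s.esymm k = t.esymm k := by
  induction k using Nat.strong_induction_on with
  | _ k ih =>
    obtain rfl | hpos := k.eq_zero_or_pos
    · simp [Multiset.esymm]
    · refine nsmul_right_injective hpos.ne' ?_
      simp only [nsmul_eq_mul, natCast_mul_esymm_eq_sum _ k]
      congr 1
      refine Finset.sum_congr rfl fun a ha => ?_
      obtain ⟨hsum, hlt⟩ : a.1 + a.2 = k ∧ a.1 < k := by simpa using ha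
      rw [ih a.1 hlt (by lia), h a.2 (Finset.mem_Icc.mpr (by lia))]

end NewtonIdentities

section Recovery

variable {R : Type*} [CommRing R] [IsDomain R] {s t : Multiset R}

theorem multiset_eq_of_esymm_eq (hcard : s.card = t.card)
    (h : ∀ k ≤ s.card, s.esymm k = t.esymm k) : s = t := by
  have hprod : (s.map fun a => Polynomial.X - Polynomial.C a).prod =
      (t.map fun a => Polynomial.X - Polynomial.C a).prod := by
    rw [Multiset.prod_X_sub_X_eq_sum_esymm, Multiset.prod_X_sub_X_eq_sum_esymm, ← hcard]
    refine Finset.sum_congr rfl fun k hk => ?_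
    rw [h k (Finset.mem_range_succ_iff.mp hk)]
  simpa only [Polynomial.roots_multiset_prod_X_sub_C] using congrArg Polynomial.roots hprod

theorem multiset_eq_of_sum_map_pow_eq [CharZero R]
    (h : ∀ k ≤ s.card, (s.map (· ^ k)).sum = (t.map (· ^ k)).sum) : s = t := by
  have hcard : s.card = t.card := by simpa using h 0 (Nat.zero_le _)
  exact multiset_eq_of_esymm_eq hcard fun _ =>
    esymm_eq_of_sum_map_pow_eq fun k hk => h k (Finset.mem_Icc.mp hk).2

end Recovery

theorem dynamicSetEncoding_injective_up_to_swaps_general {ι K : Type*} [Field K] [CharZero K]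
    {lb hb : K} (hne : lb ≠ hb) {s t : Multiset (ι → K)}
    (h : ∀ i, ∀ k ≤ s.card, (s.map fun x => ((x i - lb) / (hb - lb)) ^ k).sum =
      (t.map fun x => ((x i - lb) / (hb - lb)) ^ k).sum) (i : ι) :
    s.map (fun x => x i) = t.map (fun x => x i) := by
  have normalize_injective : Function.Injective fun y : K => (y - lb) / (hb - lb) :=
    fun x y hxy => sub_left_injective ((div_left_inj' (sub_ne_zero.mpr hne.symm)).mp hxy)
  refine Multiset.map_injective normalize_injective (multiset_eq_of_sum_map_pow_eq ?_)
  simpa only [Multiset.map_map, Multiset.card_map, Function.comp_def] using h i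

/-- Lemma 2 (dynamic vector set mapping): the encoding is injective up to
feature swaps, i.e. equal encodings force equal cardinalities and equal
per-coordinate multisets. -/
theorem dynamicSetEncoding_injective_up_to_swaps
    (lb hb : ℝ) (hlt : lb < hb) (m N : ℕ) (hm : 0 < m) (hN : 0 < N)
    (n : ℕ) (hn : N ≤ n)
    (s t : Multiset (Fin m → ℝ))
    (hs : ∀ x ∈ s, ∀ i, lb ≤ x i ∧ x i ≤ hb)
    (ht : ∀ x ∈ t, ∀ i, lb ≤ x i ∧ x i ≤ hb)
    (hsc1 : 1 ≤ Multiset.card s) (hscN : Multiset.card s ≤ N)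
    (htc1 : 1 ≤ Multiset.card t) (htcN : Multiset.card t ≤ N)
    (henc : dynamicSetEncoding lb hb m n s = dynamicSetEncoding lb hb m n t) :
    Multiset.card s = Multiset.card t ∧
      ∀ i : Fin m, s.map (fun x => x i) = t.map (fun x => x i) := by
  exact ⟨congrArg Prod.snd henc, dynamicSetEncoding_injective_up_to_swaps_general hlt.ne
    fun i k hk => congrFun₂ (congrArg Prod.fst henc) i ⟨k, by lia⟩⟩
end
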